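/- arXiv:1004.4530 — 5 statements merged into one kernel-verified Lean document; each statement's English description precedes it below -/
import Mathlib

section
/- Let {(φ_n, ψ_n)}_{n≥1} be any sequence of encoder/decoder pairs that asymptotically realizes a (2,2)-threshold scheme with correlation level ℓ ≥ 0. Then limsup_{n→∞} max{ −(1/n) log₂ P_n^X , −(1/n) log₂ P_n^Y } ≤ ℓ; that is, the exponent of the success probability of an impersonation attack cannot exceed the correlation level. -/
open Finset Filter Real
open scoped BigOperators

noncomputable section

/-- `p` is a probability mass function on a finite type. -/
def IsPMF {α : Type*} [Fintype α] (p : α → ℝ) : Prop :=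
  (∀ a, 0 ≤ p a) ∧ ∑ a, p a = 1

open scoped Classical in
/-- The distribution (pushforward pmf) of a random variable `X`
defined on a finite sample space carrying the pmf `p`. -/
def distOf {Ω α : Type*} [Fintype Ω] (p : Ω → ℝ) (X : Ω → α) (x : α) : ℝ :=
  ∑ ω ∈ Finset.univ.filter fun ω => X ω = x, p ω

/-- Base-2 Shannon entropy of a pmf on a finite type
(the convention `0 · log₂ 0 = 0` holds since `Real.logb 2 0 = 0`). -/
def ent {α : Type*} [Fintype α] (q : α → ℝ) : ℝ :=
  -∑ x, q x * Real.logb 2 (q x)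

/-- Base-2 entropy `H(X)` of a random variable `X` under pmf `p`. -/
def entRV {Ω α : Type*} [Fintype Ω] [Fintype α] (p : Ω → ℝ) (X : Ω → α) : ℝ :=
  ent (distOf p X)

/-- Base-2 conditional entropy `H(X|Y) = H(X,Y) − H(Y)`. -/
def condEnt {Ω α β : Type*} [Fintype Ω] [Fintype α] [Fintype β]
    (p : Ω → ℝ) (X : Ω → α) (Y : Ω → β) : ℝ :=
  entRV p (fun ω => (X ω, Y ω)) - entRV p Y

/-- Base-2 mutual information `I(X;Y) = H(X) + H(Y) − H(X,Y)`. -/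
def MI {Ω α β : Type*} [Fintype Ω] [Fintype α] [Fintype β]
    (p : Ω → ℝ) (X : Ω → α) (Y : Ω → β) : ℝ :=
  entRV p X + entRV p Y - entRV p (fun ω => (X ω, Y ω))

/-- `X` and `Y` are independent random variables under the pmf `p`. -/
def IndepRV {Ω α β : Type*} [Fintype Ω] (p : Ω → ℝ) (X : Ω → α) (Y : Ω → β) : Prop :=
  ∀ a b, distOf p (fun ω => (X ω, Y ω)) (a, b) = distOf p X a * distOf p Y b

/-- An encoder/decoder sequence for the asymptotic (2,2)-threshold setup:
for each `n`, a finite nonempty randomness alphabet `U n`, finite share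
alphabets `X n` and `Y n`, a deterministic encoder `enc n` mapping the `n`
secrets and the uniform random number to the two shares, and a decoder
`dec n` (`none` plays the role of the detection symbol `⊥`). -/
structure Scheme22 (𝒮 : Type) where
  U : ℕ → Type
  X : ℕ → Type
  Y : ℕ → Type
  fU : ∀ n, Fintype (U n)
  fX : ∀ n, Fintype (X n)
  fY : ∀ n, Fintype (Y n)
  neU : ∀ n, Nonempty (U n)
  enc : ∀ n, (Fin n → 𝒮) → U n → X n × Y n
  dec : ∀ n, X n × Y n → Option (Fin n → 𝒮)

attribute [instance] Scheme22.fU Scheme22.fX Scheme22.fY Scheme22.neU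

variable {𝒮 : Type} [Fintype 𝒮]

/-- The joint pmf of `(Sⁿ, Uₙ)` on `(Fin n → 𝒮) × C.U n`:
`Sⁿ` is i.i.d. with marginal `PS`, and `Uₙ` is uniform and independent of `Sⁿ`. -/
def jp (C : Scheme22 𝒮) (PS : 𝒮 → ℝ) (n : ℕ) : (Fin n → 𝒮) × C.U n → ℝ :=
  fun ω => (∏ i, PS (ω.1 i)) / (Fintype.card (C.U n) : ℝ)

/-- The secret `Sⁿ` as a random variable. -/
def Sn (C : Scheme22 𝒮) (n : ℕ) : (Fin n → 𝒮) × C.U n → (Fin n → 𝒮) := Prod.fst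

/-- The share `Xₙ` as a random variable. -/
def Xn (C : Scheme22 𝒮) (n : ℕ) : (Fin n → 𝒮) × C.U n → C.X n :=
  fun ω => (C.enc n ω.1 ω.2).1

/-- The share `Yₙ` as a random variable. -/
def Yn (C : Scheme22 𝒮) (n : ℕ) : (Fin n → 𝒮) × C.U n → C.Y n :=
  fun ω => (C.enc n ω.1 ω.2).2

open scoped Classical in
/-- The acceptance region `𝒜ₙ` of the decoder. -/
def AccRegion (C : Scheme22 𝒮) (n : ℕ) : Finset (C.X n × C.Y n) :=
  Finset.univ.filter fun xy => C.dec n xy ≠ none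

open scoped Classical in
/-- The decoding error probability `Pₙᵉ = Pr{ψₙ(φₙ(Sⁿ,Uₙ)) ≠ Sⁿ}`. -/
def Pe (C : Scheme22 𝒮) (PS : 𝒮 → ℝ) (n : ℕ) : ℝ :=
  ∑ ω ∈ Finset.univ.filter
      (fun ω : (Fin n → 𝒮) × C.U n => C.dec n (C.enc n ω.1 ω.2) ≠ some ω.1),
    jp C PS n ω

/-- `Pₙˣ`: the maximal success probability of impersonating participant 1,
the supremum over all forging distributions `Q` on `𝒳ₙ`. -/
def PimpX (C : Scheme22 𝒮) (PS : 𝒮 → ℝ) (n : ℕ) : ℝ :=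
  ⨆ Q : {Q : C.X n → ℝ // IsPMF Q},
    ∑ xy ∈ AccRegion C n, Q.1 xy.1 * distOf (jp C PS n) (Yn C n) xy.2

/-- `Pₙʸ`: the maximal success probability of impersonating participant 2. -/
def PimpY (C : Scheme22 𝒮) (PS : 𝒮 → ℝ) (n : ℕ) : ℝ :=
  ⨆ Q : {Q : C.Y n → ℝ // IsPMF Q},
    ∑ xy ∈ AccRegion C n, distOf (jp C PS n) (Xn C n) xy.1 * Q.1 xy.2

/-- The sequence `{(φₙ,ψₙ)}` asymptotically realizes a (2,2)-threshold scheme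
with correlation level `ℓ`: vanishing decoding error probability, vanishing
normalized leakage `I(Sⁿ;Xₙ)/n` and `I(Sⁿ;Yₙ)/n`, and `I(Xₙ;Yₙ)/n → ℓ`. -/
def Realizes (C : Scheme22 𝒮) (PS : 𝒮 → ℝ) (ℓ : ℝ) : Prop :=
  Tendsto (fun n => Pe C PS n) atTop (nhds 0) ∧
  Tendsto (fun n => MI (jp C PS n) (Sn C n) (Xn C n) / (n : ℝ)) atTop (nhds 0) ∧
  Tendsto (fun n => MI (jp C PS n) (Sn C n) (Yn C n) / (n : ℝ)) atTop (nhds 0) ∧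
  Tendsto (fun n => MI (jp C PS n) (Xn C n) (Yn C n) / (n : ℝ)) atTop (nhds ℓ)

theorem distOf_nonneg' {Ω α : Type*} [Fintype Ω] {p : Ω → ℝ} (hp : ∀ a, 0 ≤ p a) (X : Ω → α)
    (x : α) : 0 ≤ distOf p X x := Finset.sum_nonneg fun _ _ => hp _

theorem distOf_sum_filter {Ω α : Type*} [Fintype Ω] [Fintype α] (p : Ω → ℝ) (X : Ω → α)
    (f : α → ℝ) : ∑ x, distOf p X x * f x = ∑ ω, p ω * f (X ω) := by
  classical
  simp only [distOf, Finset.sum_mul]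
  rw [← Finset.sum_fiberwise_of_maps_to (s := Finset.univ) (t := Finset.univ) (g := X)
    (fun _ _ => Finset.mem_univ _)]
  refine Finset.sum_congr rfl fun x _ => ?_
  refine Finset.sum_congr (by ext; simp) fun ω hω => ?_
  simp at hω
  rw [hω]

theorem distOf_isPMF {Ω α : Type*} [Fintype Ω] [Fintype α] {p : Ω → ℝ} (hp : IsPMF p)
    (X : Ω → α) : IsPMF (distOf p X) := by
  refine ⟨distOf_nonneg' hp.1 X, ?_⟩
  have := distOf_sum_filter p X (fun _ => 1)
  simpa [hp.2] using this

theorem le_distOf {Ω α : Type*} [Fintype Ω] {p : Ω → ℝ} (hp : ∀ a, 0 ≤ p a) (X : Ω → α)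
    {s : Finset Ω} {x : α} (h : ∀ ω ∈ s, X ω = x) : ∑ ω ∈ s, p ω ≤ distOf p X x := by
  classical
  unfold distOf
  refine Finset.sum_le_sum_of_subset_of_nonneg ?_ fun _ _ _ => hp _
  intro ω hω
  simp [h ω hω]

theorem MI_eq {Ω α β : Type*} [Fintype Ω] [Fintype α] [Fintype β]
    (p : Ω → ℝ) (X : Ω → α) (Y : Ω → β) :
    MI p X Y = ∑ z : α × β, distOf p (fun ω => (X ω, Y ω)) z *
      (logb 2 (distOf p (fun ω => (X ω, Y ω)) z) - logb 2 (distOf p X z.1)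
        - logb 2 (distOf p Y z.2)) := by
  unfold MI entRV ent
  rw [distOf_sum_filter p X (fun x => logb 2 (distOf p X x)),
    distOf_sum_filter p Y (fun x => logb 2 (distOf p Y x)),
    distOf_sum_filter p (fun ω => (X ω, Y ω))
      (fun z => logb 2 (distOf p (fun ω => (X ω, Y ω)) z)),
    distOf_sum_filter p (fun ω => (X ω, Y ω))
      (fun z => (logb 2 (distOf p (fun ω => (X ω, Y ω)) z) - logb 2 (distOf p X z.1)
        - logb 2 (distOf p Y z.2)))]
  simp only [mul_sub, Finset.sum_sub_distrib]
  ring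

theorem pt_ineq {p a b c : ℝ} (hp : 0 ≤ p) (ha : p ≤ a) (hb : p ≤ b) (hc : 0 < c) :
    p * log c + p - c * (a * b) ≤ p * (log p - log a - log b) := by
  rcases hp.eq_or_lt with h | h
  · subst h
    have : 0 ≤ c * (a * b) := by positivity
    simp; linarith
  · have ha' : 0 < a := h.trans_le ha
    have hb' : 0 < b := h.trans_le hb
    have h1 := log_le_sub_one_of_pos (x := c * (a * b) / p) (by positivity)
    rw [log_div (by positivity) (by positivity), log_mul (by positivity) (by positivity),
      log_mul (by positivity) (by positivity)] at h1
    have h2 := mul_le_mul_of_nonneg_left h1 hp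
    have h3 : p * (c * (a * b) / p - 1) = c * (a * b) - p := by field_simp
    rw [h3] at h2
    nlinarith

theorem key_ineq {Ω α β : Type*} [Fintype Ω] [Fintype α] [Fintype β]
    {p : Ω → ℝ} (hp : IsPMF p) (X : Ω → α) (Y : Ω → β) (A : Finset (α × β))
    {b : ℝ} (hb : b = ∑ z ∈ A, distOf p X z.1 * distOf p Y z.2)
    (hpos : 0 < ∑ z ∈ A, distOf p (fun ω => (X ω, Y ω)) z) :
    0 < b ∧ (∑ z ∈ A, distOf p (fun ω => (X ω, Y ω)) z) * (-logb 2 b)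
      ≤ MI p X Y + 1 / log 2 := by
  classical
  set J := distOf p (fun ω => (X ω, Y ω)) with hJ
  have hJX : ∀ z, J z ≤ distOf p X z.1 := fun z => le_distOf hp.1 X (by
    intro ω hω; simp at hω; rw [← hω])
  have hJY : ∀ z, J z ≤ distOf p Y z.2 := fun z => le_distOf hp.1 Y (by
    intro ω hω; simp at hω; rw [← hω])
  have hJP : IsPMF J := distOf_isPMF hp _
  have hXP := distOf_isPMF hp X
  have hYP := distOf_isPMF hp Y
  have hbpos : 0 < b := by
    obtain ⟨z, hz, hz'⟩ : ∃ z ∈ A, 0 < J z := by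
      by_contra! hcon
      exact absurd (Finset.sum_nonpos hcon) (not_le.mpr hpos)
    rw [hb]
    exact Finset.sum_pos' (fun z _ => mul_nonneg (hXP.1 _) (hYP.1 _))
      ⟨z, hz, mul_pos (hz'.trans_le (hJX z)) (hz'.trans_le (hJY z))⟩
  refine ⟨hbpos, ?_⟩
  have htot : ∑ z : α × β, distOf p X z.1 * distOf p Y z.2 = 1 := by
    rw [Fintype.sum_prod_type, ← Finset.sum_mul_sum, hXP.2, hYP.2, one_mul]
  have h1 : ∑ z ∈ A, (J z * log b⁻¹ + J z - b⁻¹ * (distOf p X z.1 * distOf p Y z.2)) ≤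
      ∑ z ∈ A, J z * (log (J z) - log (distOf p X z.1) - log (distOf p Y z.2)) :=
    Finset.sum_le_sum fun z _ => pt_ineq (hJP.1 z) (hJX z) (hJY z) (by positivity)
  have h2 : ∑ z ∈ Aᶜ, (J z * log 1 + J z - 1 * (distOf p X z.1 * distOf p Y z.2)) ≤
      ∑ z ∈ Aᶜ, J z * (log (J z) - log (distOf p X z.1) - log (distOf p Y z.2)) :=
    Finset.sum_le_sum fun z _ => pt_ineq (hJP.1 z) (hJX z) (hJY z) (by positivity)
  have h3 := add_le_add h1 h2
  rw [Finset.sum_add_sum_compl] at h3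
  simp only [Finset.sum_sub_distrib, Finset.sum_add_distrib, ← Finset.sum_mul, ← Finset.mul_sum,
    ← hb] at h3
  have h4 := Finset.sum_add_sum_compl A J
  have h5 := Finset.sum_add_sum_compl A (fun z => distOf p X z.1 * distOf p Y z.2)
  rw [hJP.2] at h4
  rw [htot, ← hb] at h5
  rw [inv_mul_cancel₀ hbpos.ne', log_one, log_inv] at h3
  have hl2 : 0 < log 2 := log_pos (by norm_num)
  have h6 : MI p X Y = (∑ z, J z * (log (J z) - log (distOf p X z.1) - log (distOf p Y z.2)))
      / log 2 := by
    rw [MI_eq, Finset.sum_div]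
    refine Finset.sum_congr rfl fun z _ => ?_
    simp only [logb]; ring
  rw [h6, ← add_div, le_div_iff₀ hl2]
  have h7 : (∑ z ∈ A, J z) * (-logb 2 b) * log 2 = (∑ z ∈ A, J z) * (-log b) := by
    simp only [logb]; field_simp
  rw [h7]
  linarith

theorem jp_isPMF {𝒮 : Type} [Fintype 𝒮] {PS : 𝒮 → ℝ} (hPS : IsPMF PS) (C : Scheme22 𝒮) (n : ℕ) :
    IsPMF (jp C PS n) := by
  classical
  refine ⟨fun ω => div_nonneg (Finset.prod_nonneg fun _ _ => hPS.1 _) (Nat.cast_nonneg _), ?_⟩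
  have hc : (Fintype.card (C.U n) : ℝ) ≠ 0 := by
    exact_mod_cast Fintype.card_ne_zero
  simp only [jp, Fintype.sum_prod_type, Finset.sum_const, Finset.card_univ, nsmul_eq_mul]
  simp only [mul_div_cancel₀ _ hc]
  rw [← Fintype.prod_sum (fun (_ : Fin n) s => PS s)]
  simp [hPS.2]

theorem acc_ge {𝒮 : Type} [Fintype 𝒮] {PS : 𝒮 → ℝ} (hPS : IsPMF PS) (C : Scheme22 𝒮) (n : ℕ) :
    1 - Pe C PS n ≤
      ∑ z ∈ AccRegion C n, distOf (jp C PS n) (fun ω => (Xn C n ω, Yn C n ω)) z := by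
  classical
  have hp := jp_isPMF hPS C n
  have h := distOf_sum_filter (jp C PS n) (fun ω => (Xn C n ω, Yn C n ω))
    (fun z => if C.dec n z ≠ none then 1 else 0)
  have e : ∑ z ∈ AccRegion C n, distOf (jp C PS n) (fun ω => (Xn C n ω, Yn C n ω)) z
      = ∑ ω, jp C PS n ω * (if C.dec n (Xn C n ω, Yn C n ω) ≠ none then 1 else 0) := by
    rw [← h]
    simp only [AccRegion, Finset.sum_filter, mul_ite, mul_one, mul_zero]
  rw [e, sub_le_iff_le_add]
  refine hp.2.symm.le.trans ?_
  rw [Pe, Finset.sum_filter, ← Finset.sum_add_distrib]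
  refine Finset.sum_le_sum fun ω _ => ?_
  have h0 := hp.1 ω
  change _ ≤ jp C PS n ω * (if C.dec n (C.enc n ω.1 ω.2) ≠ none then 1 else 0) + _
  by_cases hd : C.dec n (C.enc n ω.1 ω.2) = none
  · simp [hd]
  · simp only [ne_eq, hd, not_false_eq_true, if_true, mul_one]
    split_ifs <;> linarith

theorem prod_le_one {α β : Type*} [Fintype α] [Fintype β] {P : α → ℝ} {Q : β → ℝ}
    (hP : IsPMF P) (hQ : IsPMF Q) (A : Finset (α × β)) : ∑ z ∈ A, P z.1 * Q z.2 ≤ 1 := by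
  have htot : ∑ z : α × β, P z.1 * Q z.2 = 1 := by
    rw [Fintype.sum_prod_type, ← Finset.sum_mul_sum, hP.2, hQ.2, one_mul]
  rw [← htot]
  exact Finset.sum_le_sum_of_subset_of_nonneg (Finset.subset_univ _)
    fun z _ _ => mul_nonneg (hP.1 _) (hQ.1 _)

theorem final_bound {𝒮 : Type} [Fintype 𝒮] {PS : 𝒮 → ℝ} (hPS : IsPMF PS) (C : Scheme22 𝒮) (n : ℕ)
    (hPe : Pe C PS n < 1) :
    0 ≤ max (-Real.logb 2 (PimpX C PS n) / (n : ℝ)) (-Real.logb 2 (PimpY C PS n) / (n : ℝ)) ∧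
    max (-Real.logb 2 (PimpX C PS n) / (n : ℝ)) (-Real.logb 2 (PimpY C PS n) / (n : ℝ)) ≤
      (MI (jp C PS n) (Xn C n) (Yn C n) / n + (1 / log 2) / n) / (1 - Pe C PS n) := by
  have hp := jp_isPMF hPS C n
  have hX := distOf_isPMF hp (Xn C n)
  have hY := distOf_isPMF hp (Yn C n)
  have hacc := acc_ge hPS C n
  obtain ⟨hb, hk⟩ := key_ineq hp (Xn C n) (Yn C n) (AccRegion C n) rfl (by linarith)
  set b := ∑ z ∈ AccRegion C n, distOf (jp C PS n) (Xn C n) z.1 * distOf (jp C PS n) (Yn C n) z.2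
    with hbdef
  have hb1 : b ≤ 1 := prod_le_one hX hY _
  have hx1 : b ≤ PimpX C PS n :=
    le_ciSup (f := fun Q : {Q : C.X n → ℝ // IsPMF Q} =>
      ∑ xy ∈ AccRegion C n, Q.1 xy.1 * distOf (jp C PS n) (Yn C n) xy.2)
      ⟨1, by rintro _ ⟨Q, rfl⟩; exact prod_le_one Q.2 hY _⟩ ⟨_, hX⟩
  have hy1 : b ≤ PimpY C PS n :=
    le_ciSup (f := fun Q : {Q : C.Y n → ℝ // IsPMF Q} =>
      ∑ xy ∈ AccRegion C n, distOf (jp C PS n) (Xn C n) xy.1 * Q.1 xy.2)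
      ⟨1, by rintro _ ⟨Q, rfl⟩; exact prod_le_one hX Q.2 _⟩ ⟨_, hY⟩
  have hx2 : PimpX C PS n ≤ 1 := by
    have : Nonempty {Q : C.X n → ℝ // IsPMF Q} := ⟨⟨_, hX⟩⟩
    exact ciSup_le fun Q => prod_le_one Q.2 hY _
  have hlb : 0 ≤ -logb 2 b := by
    have := logb_nonpos (b := 2) (by norm_num) hb.le hb1
    linarith
  have hlx : -logb 2 (PimpX C PS n) ≤ -logb 2 b :=
    neg_le_neg (logb_le_logb_of_le (by norm_num) hb hx1)
  have hly : -logb 2 (PimpY C PS n) ≤ -logb 2 b :=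
    neg_le_neg (logb_le_logb_of_le (by norm_num) hb hy1)
  have hlx0 : 0 ≤ -logb 2 (PimpX C PS n) := by
    have := logb_nonpos (b := 2) (by norm_num) (hb.le.trans hx1) hx2
    linarith
  have hmain : -logb 2 b ≤ (MI (jp C PS n) (Xn C n) (Yn C n) + 1 / log 2) / (1 - Pe C PS n) := by
    rw [le_div_iff₀ (by linarith)]
    nlinarith
  have hmain' : -logb 2 b / n ≤
      (MI (jp C PS n) (Xn C n) (Yn C n) / n + (1 / log 2) / n) / (1 - Pe C PS n) := by
    rw [← add_div, div_right_comm]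
    exact div_le_div_of_nonneg_right hmain (Nat.cast_nonneg _)
  refine ⟨le_max_of_le_left (div_nonneg hlx0 (Nat.cast_nonneg _)), max_le ?_ ?_⟩
  · exact (div_le_div_of_nonneg_right hlx (Nat.cast_nonneg _)).trans hmain'
  · exact (div_le_div_of_nonneg_right hly (Nat.cast_nonneg _)).trans hmain'

/-- converse part, exponents: for any sequence of
encoder/decoder pairs asymptotically realizing a (2,2)-threshold scheme with
correlation level `ℓ ≥ 0`, the exponent of the success probability of an
impersonation attack cannot exceed the correlation level `ℓ`. -/
theorem statement2 {𝒮 : Type} [Fintype 𝒮] (PS : 𝒮 → ℝ) (hPS : IsPMF PS)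
    (ℓ : ℝ) (hℓ : 0 ≤ ℓ) (C : Scheme22 𝒮) (hC : Realizes C PS ℓ) :
    limsup (fun n => max (-Real.logb 2 (PimpX C PS n) / (n : ℝ))
      (-Real.logb 2 (PimpY C PS n) / (n : ℝ))) atTop ≤ ℓ := by
  obtain ⟨h1, -, -, h4⟩ := hC
  have hev : ∀ᶠ n in atTop, Pe C PS n < 1 := h1.eventually (gt_mem_nhds one_pos)
  have hlim : Tendsto (fun n : ℕ =>
      (MI (jp C PS n) (Xn C n) (Yn C n) / n + (1 / log 2) / n) / (1 - Pe C PS n))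
      atTop (nhds ℓ) := by
    have := (h4.add (tendsto_const_div_atTop_nhds_zero_nat (1 / log 2))).div
      (h1.const_sub 1) (by norm_num)
    rw [add_zero, sub_zero, div_one] at this
    exact this
  rw [← hlim.limsup_eq]
  refine limsup_le_limsup ?_ ?_ hlim.isBoundedUnder_le
  · filter_upwards [hev] with n hn using (final_bound hPS C n hn).2
  · refine IsBoundedUnder.isCoboundedUnder_le ⟨0, ?_⟩
    simp only [eventually_map]
    filter_upwards [hev] with n hn using (final_bound hPS C n hn).1
end
end

section
/- Let X and Y be random variables taking values in finite sets 𝒳 and 𝒴 with joint distribution P_{XY} and marginals P_X, P_Y, and let A ⊆ 𝒳 × 𝒴. Put α = Σ_{(x,y)∉A} P_{XY}(x,y) (the error probability of the first kind) and β = Σ_{(x,y)∈A} P_X(x)P_Y(y) (the error probability of the second kind). If β > 0, then I(X;Y) ≥ −h(α) − (1−α) log₂ β, where h(p) = −p log₂ p − (1−p) log₂(1−p) is the binary entropy function. -/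
open Finset Filter Real
open scoped BigOperators

noncomputable section

/-- The `𝒳`-marginal of a joint distribution on `𝒳 × 𝒴`. -/
def margX {𝒳 𝒴 : Type*} [Fintype 𝒴] (q : 𝒳 × 𝒴 → ℝ) : 𝒳 → ℝ :=
  fun x => ∑ y, q (x, y)

/-- The `𝒴`-marginal of a joint distribution on `𝒳 × 𝒴`. -/
def margY {𝒳 𝒴 : Type*} [Fintype 𝒳] (q : 𝒳 × 𝒴 → ℝ) : 𝒴 → ℝ :=
  fun y => ∑ x, q (x, y)

/-- Base-2 mutual information of a joint distribution on `𝒳 × 𝒴`. -/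
def miDist {𝒳 𝒴 : Type*} [Fintype 𝒳] [Fintype 𝒴] (q : 𝒳 × 𝒴 → ℝ) : ℝ :=
  ent (margX q) + ent (margY q) - ent q

/-- The binary entropy function `h(a) = −a log₂ a − (1−a) log₂ (1−a)`. -/
def binEnt (a : ℝ) : ℝ :=
  -(a * Real.logb 2 a) - (1 - a) * Real.logb 2 (1 - a)

theorem logsum_aux {ι : Type*} (S : Finset ι) (p q : ι → ℝ) (hp : ∀ i, 0 ≤ p i)
    (hq : ∀ i, 0 ≤ q i) (hpq : ∀ i, 0 < p i → 0 < q i) :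
    (∑ i ∈ S, p i) * (Real.logb 2 (∑ i ∈ S, p i) - Real.logb 2 (∑ i ∈ S, q i)) ≤
      ∑ i ∈ S, p i * (Real.logb 2 (p i) - Real.logb 2 (q i)) := by
  have key : (∑ i ∈ S, p i) * (Real.log (∑ i ∈ S, p i) - Real.log (∑ i ∈ S, q i)) ≤
      ∑ i ∈ S, p i * (Real.log (p i) - Real.log (q i)) := by
    set P := ∑ i ∈ S, p i with hP
    set Q := ∑ i ∈ S, q i with hQ
    have hP0 : 0 ≤ P := Finset.sum_nonneg fun i _ => hp i
    rcases hP0.eq_or_lt with h0 | hPpos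
    · have hz : ∀ i ∈ S, p i = 0 :=
        (Finset.sum_eq_zero_iff_of_nonneg fun i _ => hp i).1 h0.symm
      rw [← h0, zero_mul, Finset.sum_eq_zero]
      intro i hi
      rw [hz i hi, zero_mul]
    · have hQpos : 0 < Q := by
        obtain ⟨i, hi, hpi⟩ := Finset.exists_lt_of_sum_lt
          (s := S) (f := fun _ => (0 : ℝ)) (g := p) (by simpa using hPpos)
        exact Finset.sum_pos' (fun i _ => hq i) ⟨i, hi, hpq i hpi⟩
      have hpt : ∀ i ∈ S, p i * (Real.log P - Real.log Q) + (p i - q i * (P / Q)) ≤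
          p i * (Real.log (p i) - Real.log (q i)) := by
        intro i _
        rcases (hp i).eq_or_lt with h | h
        · rw [← h]
          have := mul_nonneg (hq i) (div_pos hPpos hQpos).le
          linarith
        · have hqi := hpq i h
          have h1 := Real.log_le_sub_one_of_pos
            (show 0 < (q i * P) / (p i * Q) by positivity)
          rw [Real.log_div (by positivity) (by positivity),
            Real.log_mul hqi.ne' hPpos.ne', Real.log_mul h.ne' hQpos.ne'] at h1
          have h2 := mul_le_mul_of_nonneg_left h1 h.le
          have h3 : p i * ((q i * P) / (p i * Q) - 1) = q i * (P / Q) - p i := by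
            field_simp
          rw [h3] at h2
          linarith
      have hs := Finset.sum_le_sum hpt
      rw [Finset.sum_add_distrib, ← Finset.sum_mul, Finset.sum_sub_distrib, ← Finset.sum_mul,
        ← hP, ← hQ, mul_div_cancel₀ _ hQpos.ne'] at hs
      linarith
  have hl : 0 < Real.log 2 := Real.log_pos (by norm_num)
  have := div_le_div_of_nonneg_right key hl.le
  simp only [Real.logb, ← sub_div, ← mul_div_assoc, ← Finset.sum_div]
  exact this

open scoped Classical in
/-- hypothesis-testing bound: for a joint distribution
`P_{XY}` with marginals `P_X, P_Y` and an acceptance region `A`, with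
first-kind error `α = P_{XY}(Aᶜ)` and second-kind error `β = (P_X×P_Y)(A)`,
if `β > 0` then `I(X;Y) ≥ −h(α) − (1−α) log₂ β`. -/
theorem statement7 {𝒳 𝒴 : Type} [Fintype 𝒳] [Fintype 𝒴]
    (PXY : 𝒳 × 𝒴 → ℝ) (hPXY : IsPMF PXY) (A : Finset (𝒳 × 𝒴)) (α β : ℝ)
    (hα : α = ∑ xy ∈ Aᶜ, PXY xy)
    (hβ : β = ∑ xy ∈ A, margX PXY xy.1 * margY PXY xy.2)
    (hβpos : 0 < β) :
    -binEnt α - (1 - α) * Real.logb 2 β ≤ miDist PXY := by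
  obtain ⟨hp, hsum⟩ := hPXY
  have hX : ∀ x, 0 ≤ margX PXY x := fun x => Finset.sum_nonneg fun y _ => hp _
  have hY : ∀ y, 0 ≤ margY PXY y := fun y => Finset.sum_nonneg fun x _ => hp _
  have hXp : ∀ z, 0 < PXY z → 0 < margX PXY z.1 := fun z hz =>
    Finset.sum_pos' (fun y _ => hp _) ⟨z.2, Finset.mem_univ _, hz⟩
  have hYp : ∀ z, 0 < PXY z → 0 < margY PXY z.2 := fun z hz =>
    Finset.sum_pos' (fun y _ => hp _) ⟨z.1, Finset.mem_univ _, hz⟩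
  set q : 𝒳 × 𝒴 → ℝ := fun z => margX PXY z.1 * margY PXY z.2 with hqdef
  have hq : ∀ z, 0 ≤ q z := fun z => mul_nonneg (hX _) (hY _)
  have hpq : ∀ z, 0 < PXY z → 0 < q z := fun z hz => mul_pos (hXp z hz) (hYp z hz)
  have hX1 : ∑ x, margX PXY x = 1 := by
    rw [← hsum, Fintype.sum_prod_type]; rfl
  have hY1 : ∑ y, margY PXY y = 1 := by
    rw [← hsum, Fintype.sum_prod_type_right]; rfl
  have hq1 : ∑ z, q z = 1 := by
    rw [Fintype.sum_prod_type]
    simp only [hqdef, ← Finset.mul_sum, hY1, mul_one, hX1]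
  have hmi : miDist PXY = ∑ z, PXY z * (Real.logb 2 (PXY z) - Real.logb 2 (q z)) := by
    have e1 : ∑ x, margX PXY x * Real.logb 2 (margX PXY x) =
        ∑ z, PXY z * Real.logb 2 (margX PXY z.1) := by
      rw [Fintype.sum_prod_type]
      refine Finset.sum_congr rfl fun x _ => ?_
      exact Finset.sum_mul _ _ _
    have e2 : ∑ y, margY PXY y * Real.logb 2 (margY PXY y) =
        ∑ z, PXY z * Real.logb 2 (margY PXY z.2) := by
      rw [Fintype.sum_prod_type_right]
      refine Finset.sum_congr rfl fun x _ => ?_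
      exact Finset.sum_mul _ _ _
    have e3 : ∑ z, PXY z * (Real.logb 2 (PXY z) - Real.logb 2 (q z)) =
        ∑ z, (PXY z * Real.logb 2 (PXY z) - PXY z * Real.logb 2 (margX PXY z.1)
          - PXY z * Real.logb 2 (margY PXY z.2)) := by
      refine Finset.sum_congr rfl fun z _ => ?_
      rcases (hp z).eq_or_lt with h | h
      · simp [← h]
      · rw [hqdef]
        simp only
        rw [Real.logb_mul (hXp z h).ne' (hYp z h).ne']
        ring
    rw [e3, Finset.sum_sub_distrib, Finset.sum_sub_distrib]
    unfold miDist ent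
    rw [e1, e2]
    ring
  have hA := logsum_aux A PXY q hp hq hpq
  have hAc := logsum_aux Aᶜ PXY q hp hq hpq
  have h1 : ∑ z ∈ A, PXY z = 1 - α := by
    have := Finset.sum_add_sum_compl A PXY
    linarith
  have hα0 : 0 ≤ α := hα ▸ Finset.sum_nonneg fun z _ => hp z
  rw [h1, ← hβ] at hA
  rw [← hα] at hAc
  have hb0 : 0 ≤ ∑ z ∈ Aᶜ, q z := Finset.sum_nonneg fun z _ => hq z
  have hb1 : ∑ z ∈ Aᶜ, q z ≤ 1 := by
    have := Finset.sum_add_sum_compl A q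
    linarith
  have hlog : Real.logb 2 (∑ z ∈ Aᶜ, q z) ≤ 0 :=
    Real.logb_nonpos (by norm_num) hb0 hb1
  have hm := mul_nonneg hα0 (neg_nonneg.2 hlog)
  rw [hmi, ← Finset.sum_add_sum_compl A]
  unfold binEnt
  linarith
end
end

section
/- Let ℒ be a finite nonempty set and M ≥ 1. Let Z be a random variable with values in ℤ_M, let U^M be uniformly distributed on ℤ_M, and let U^L be uniformly distributed on ℒ, with Z, U^M, U^L mutually independent. Define X = (U^L, Z ⊖ U^M) and Y = (U^L, U^M). Then I(X;Y) = log₂|ℒ| + log₂ M − H(Z). -/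
open Finset Filter Real
open scoped BigOperators

noncomputable section

lemma distOf_congr' {Ω α β : Type*} [Fintype Ω] (p : Ω → ℝ) (V : Ω → α) (W : Ω → β) (v : α) (w : β)
    (h : ∀ ω, V ω = v ↔ W ω = w) : distOf p V v = distOf p W w := by
  classical
  unfold distOf
  apply Finset.sum_congr _ (fun _ _ => rfl)
  ext ω
  simp [h]

lemma distOf_marg {Ω α β : Type*} [Fintype Ω] [Fintype β] (p : Ω → ℝ) (V : Ω → α) (W : Ω → β)
    (v : α) : distOf p V v = ∑ w, distOf p (fun ω => (V ω, W ω)) (v, w) := by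
  classical
  unfold distOf
  simp only [Finset.sum_filter, Prod.mk.injEq]
  rw [Finset.sum_comm]
  refine Finset.sum_congr rfl fun ω _ => ?_
  by_cases h : V ω = v <;> simp [h]

lemma distOf_total {Ω α : Type*} [Fintype Ω] [Fintype α] (p : Ω → ℝ) (hp : IsPMF p) (V : Ω → α) :
    ∑ v, distOf p V v = 1 := by
  classical
  rw [← hp.2]
  unfold distOf
  simp only [Finset.sum_filter]
  rw [Finset.sum_comm]
  simp

/-- with `Z` on `ℤ_M`, `Uᴹ` uniform on `ℤ_M`, `Uᴸ` uniform
on `ℒ`, the three mutually independent, and shares `X = (Uᴸ, Z ⊖ Uᴹ)`,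
`Y = (Uᴸ, Uᴹ)`, one has `I(X;Y) = log₂|ℒ| + log₂ M − H(Z)`. -/
theorem statement11 {Ω L : Type} [Fintype Ω] [Fintype L] [Nonempty L]
    (M : ℕ) [NeZero M] (p : Ω → ℝ) (hp : IsPMF p)
    (Z UM : Ω → ZMod M) (UL : Ω → L)
    (hUM : ∀ u, distOf p UM u = 1 / (M : ℝ))
    (hUL : ∀ a, distOf p UL a = 1 / (Fintype.card L : ℝ))
    (hind : ∀ z m l, distOf p (fun ω => (Z ω, UM ω, UL ω)) (z, m, l)
      = distOf p Z z * distOf p UM m * distOf p UL l) :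
    MI p (fun ω => (UL ω, Z ω - UM ω)) (fun ω => (UL ω, UM ω))
      = Real.logb 2 (Fintype.card L) + Real.logb 2 M - entRV p Z := by
  classical
  have hM : (M : ℝ) ≠ 0 := Nat.cast_ne_zero.mpr (NeZero.ne M)
  have hL : (Fintype.card L : ℝ) ≠ 0 := Nat.cast_ne_zero.mpr Fintype.card_ne_zero
  have hZ := distOf_total p hp Z
  set c : ℝ := 1 / (M : ℝ) * (1 / (Fintype.card L : ℝ)) with hc
  have hc0 : c ≠ 0 := by rw [hc]; positivity
  have hlc : Real.logb 2 c = - Real.logb 2 (Fintype.card L) - Real.logb 2 M := by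
    rw [hc, Real.logb_mul (by positivity) (by positivity), one_div, one_div, Real.logb_inv,
      Real.logb_inv]
    ring
  have hcLM : (Fintype.card L : ℝ) * M * c = 1 := by
    rw [hc]; field_simp
  have hJ : ∀ z m l, distOf p (fun ω => (Z ω, UM ω, UL ω)) (z, m, l) = distOf p Z z * c := by
    intro z m l
    rw [hind, hUM, hUL, hc]; ring
  have hshift : ∀ (s : ZMod M) (f : ZMod M → ℝ), ∑ m, f (s + m) = ∑ m, f m :=
    fun s f => Equiv.sum_comp (Equiv.addLeft s) f
  have hX : ∀ x, distOf p (fun ω => (UL ω, Z ω - UM ω)) x = c := by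
    rintro ⟨l, s⟩
    rw [distOf_marg p _ UM]
    have : ∀ m, distOf p (fun ω => ((UL ω, Z ω - UM ω), UM ω)) ((l, s), m)
        = distOf p Z (s + m) * c := by
      intro m
      rw [← hJ (s + m) m l]
      apply distOf_congr'
      intro ω
      simp only [Prod.mk.injEq]
      constructor
      · rintro ⟨⟨h1, h2⟩, h3⟩
        exact ⟨by rw [← h2, ← h3]; ring, h3, h1⟩
      · rintro ⟨h1, h2, h3⟩
        exact ⟨⟨h3, by rw [h1, h2]; ring⟩, h2⟩
    rw [Finset.sum_congr rfl fun m _ => this m, ← Finset.sum_mul,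
      hshift s (fun z => distOf p Z z), hZ, one_mul]
  have hY : ∀ x, distOf p (fun ω => (UL ω, UM ω)) x = c := by
    rintro ⟨l, m⟩
    rw [distOf_marg p _ Z]
    have : ∀ z, distOf p (fun ω => ((UL ω, UM ω), Z ω)) ((l, m), z)
        = distOf p Z z * c := by
      intro z
      rw [← hJ z m l]
      apply distOf_congr'
      intro ω
      simp only [Prod.mk.injEq]
      tauto
    rw [Finset.sum_congr rfl fun m _ => this m, ← Finset.sum_mul, hZ, one_mul]
  have hXY : ∀ l s l' m, distOf p (fun ω => ((UL ω, Z ω - UM ω), (UL ω, UM ω))) ((l, s), (l', m))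
      = if l' = l then distOf p Z (s + m) * c else 0 := by
    intro l s l' m
    split_ifs with h
    · subst h
      rw [← hJ (s + m) m l']
      apply distOf_congr'
      intro ω
      simp only [Prod.mk.injEq]
      constructor
      · rintro ⟨⟨h1, h2⟩, _, h3⟩
        exact ⟨by rw [← h2, ← h3]; ring, h3, h1⟩
      · rintro ⟨h1, h2, h3⟩
        exact ⟨⟨h3, by rw [h1, h2]; ring⟩, h3, h2⟩
    · unfold distOf
      apply Finset.sum_eq_zero
      intro ω hω
      simp only [Finset.mem_filter, Prod.mk.injEq] at hω
      exact absurd (hω.2.2.1.symm.trans hω.2.1.1) h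
  have hu : ∀ V : Ω → L × ZMod M, (∀ x, distOf p V x = c) → entRV p V = - Real.logb 2 c := by
    intro V hV
    unfold entRV ent
    simp only [hV, Finset.sum_const, Finset.card_univ, Fintype.card_prod, ZMod.card, nsmul_eq_mul,
      Nat.cast_mul]
    rw [← mul_assoc, hcLM, one_mul]
  have hg : ∀ a : ℝ, a * c * Real.logb 2 (a * c)
      = c * (a * Real.logb 2 a) + c * Real.logb 2 c * a := by
    intro a
    by_cases ha : a = 0
    · simp [ha]
    · rw [Real.logb_mul ha hc0]; ring
  have hS : ∀ s : ZMod M, ∑ m, distOf p Z (s + m) * c * Real.logb 2 (distOf p Z (s + m) * c)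
      = c * (- entRV p Z) + c * Real.logb 2 c := by
    intro s
    rw [hshift s
      (fun z => distOf p Z z * c * Real.logb 2 (distOf p Z z * c))]
    simp only [hg, Finset.sum_add_distrib, ← Finset.mul_sum, hZ]
    simp [entRV, ent]
  have hE : entRV p (fun ω => ((UL ω, Z ω - UM ω), (UL ω, UM ω)))
      = entRV p Z - Real.logb 2 c := by
    have hin : ∀ (l : L) (s : ZMod M), ∑ l' : L, ∑ m : ZMod M,
        (if l' = l then distOf p Z (s + m) * c else 0) *
          Real.logb 2 (if l' = l then distOf p Z (s + m) * c else 0)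
        = c * (- entRV p Z) + c * Real.logb 2 c := by
      intro l s
      rw [Finset.sum_eq_single l]
      · simpa using hS s
      · intro b _ hb
        simp [hb]
      · simp
    rw [entRV, ent]
    simp only [Fintype.sum_prod_type, hXY, hin, Finset.sum_const, Finset.card_univ, ZMod.card,
      Fintype.card_prod, Nat.cast_mul, nsmul_eq_mul]
    linear_combination (entRV p Z - Real.logb 2 c) * hcLM
  unfold MI
  rw [hu _ hX, hu _ hY, hE, hlc]
  ring
end
end

section
/- Let X and Y be random variables taking values in finite sets 𝒳 and 𝒴 with joint distribution P_{XY} and marginals P_X, P_Y, let t be a real number, and let A be any subset of {(x,y) ∈ 𝒳 × 𝒴 : P_X(x) > 0, P_Y(y) > 0, and P_{XY}(x,y) > 2^t · P_X(x)P_Y(y)}. Then for every probability distribution Q on 𝒳, Σ_{(x,y)∈A} Q(x)P_Y(y) ≤ 2^{−t}, and symmetrically for every probability distribution Q on 𝒴, Σ_{(x,y)∈A} P_X(x)Q(y) ≤ 2^{−t}. -/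
open Finset Filter Real
open scoped BigOperators

noncomputable section

/-- change-of-measure bound: if every pair in `A` has
positive marginals and information density exceeding `t`, i.e.
`P_{XY}(x,y) > 2^t·P_X(x)P_Y(y)`, then for every forging distribution `Q`,
`Σ_{(x,y)∈A} Q(x)P_Y(y) ≤ 2^{−t}`, and symmetrically on the other side. -/
theorem statement13 {𝒳 𝒴 : Type} [Fintype 𝒳] [Fintype 𝒴]
    (PXY : 𝒳 × 𝒴 → ℝ) (hPXY : IsPMF PXY) (t : ℝ) (A : Finset (𝒳 × 𝒴))
    (hA : ∀ xy ∈ A, 0 < margX PXY xy.1 ∧ 0 < margY PXY xy.2 ∧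
      (2 : ℝ) ^ t * (margX PXY xy.1 * margY PXY xy.2) < PXY xy) :
    (∀ Q : 𝒳 → ℝ, IsPMF Q →
      ∑ xy ∈ A, Q xy.1 * margY PXY xy.2 ≤ (2 : ℝ) ^ (-t)) ∧
    (∀ Q : 𝒴 → ℝ, IsPMF Q →
      ∑ xy ∈ A, margX PXY xy.1 * Q xy.2 ≤ (2 : ℝ) ^ (-t)) := by
  obtain ⟨h0, -⟩ := hPXY
  have hc : (0 : ℝ) < (2 : ℝ) ^ t := by positivity
  have hX0 : ∀ x, 0 ≤ margX PXY x := fun x => Finset.sum_nonneg fun y _ => h0 _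
  have hY0 : ∀ y, 0 ≤ margY PXY y := fun y => Finset.sum_nonneg fun x _ => h0 _
  have key : ∀ a b p : ℝ, 0 < a → (2 : ℝ) ^ t * (a * b) < p →
      b ≤ (2 : ℝ) ^ (-t) * (p / a) := by
    intro a b p ha h
    rw [Real.rpow_neg (by norm_num), ← div_eq_inv_mul, div_div, le_div_iff₀ (by positivity)]
    nlinarith
  have hd : (0 : ℝ) ≤ (2 : ℝ) ^ (-t) := by positivity
  constructor
  · intro Q hQ
    calc ∑ xy ∈ A, Q xy.1 * margY PXY xy.2
        ≤ ∑ xy ∈ A, (2 : ℝ) ^ (-t) * (Q xy.1 * (PXY xy / margX PXY xy.1)) := by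
          refine Finset.sum_le_sum fun xy hxy => ?_
          obtain ⟨h1, h2, h3⟩ := hA xy hxy
          have := mul_le_mul_of_nonneg_left (key _ _ _ h1 h3) (hQ.1 xy.1)
          linarith
      _ ≤ ∑ xy, (2 : ℝ) ^ (-t) * (Q xy.1 * (PXY xy / margX PXY xy.1)) :=
          Finset.sum_le_sum_of_subset_of_nonneg (Finset.subset_univ _) fun xy _ _ =>
            mul_nonneg hd (mul_nonneg (hQ.1 _) (div_nonneg (h0 _) (hX0 _)))
      _ = (2 : ℝ) ^ (-t) * ∑ x, Q x * (margX PXY x / margX PXY x) := by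
          rw [← Finset.mul_sum, Fintype.sum_prod_type]
          congr 1
          refine Finset.sum_congr rfl fun x _ => ?_
          dsimp only
          rw [← Finset.mul_sum, ← Finset.sum_div]
          rfl
      _ ≤ (2 : ℝ) ^ (-t) * ∑ x, Q x :=
          mul_le_mul_of_nonneg_left (Finset.sum_le_sum fun x _ =>
            mul_le_of_le_one_right (hQ.1 x) (div_self_le_one _)) hd
      _ = (2 : ℝ) ^ (-t) := by rw [hQ.2, mul_one]
  · intro Q hQ
    calc ∑ xy ∈ A, margX PXY xy.1 * Q xy.2
        ≤ ∑ xy ∈ A, (2 : ℝ) ^ (-t) * (Q xy.2 * (PXY xy / margY PXY xy.2)) := by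
          refine Finset.sum_le_sum fun xy hxy => ?_
          obtain ⟨h1, h2, h3⟩ := hA xy hxy
          rw [mul_comm (margX PXY xy.1)] at h3
          have := mul_le_mul_of_nonneg_left (key _ _ _ h2 h3) (hQ.1 xy.2)
          linarith
      _ ≤ ∑ xy, (2 : ℝ) ^ (-t) * (Q xy.2 * (PXY xy / margY PXY xy.2)) :=
          Finset.sum_le_sum_of_subset_of_nonneg (Finset.subset_univ _) fun xy _ _ =>
            mul_nonneg hd (mul_nonneg (hQ.1 _) (div_nonneg (h0 _) (hY0 _)))
      _ = (2 : ℝ) ^ (-t) * ∑ y, Q y * (margY PXY y / margY PXY y) := by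
          rw [← Finset.mul_sum, Fintype.sum_prod_type_right]
          congr 1
          refine Finset.sum_congr rfl fun y _ => ?_
          dsimp only
          rw [← Finset.mul_sum, ← Finset.sum_div]
          rfl
      _ ≤ (2 : ℝ) ^ (-t) * ∑ y, Q y :=
          mul_le_mul_of_nonneg_left (Finset.sum_le_sum fun y _ =>
            mul_le_of_le_one_right (hQ.1 y) (div_self_le_one _)) hd
      _ = (2 : ℝ) ^ (-t) := by rw [hQ.2, mul_one]
end
end

section
/- Let M and M_S be positive integers with M ≥ M_S, and let P_S be an arbitrary probability distribution on 𝒮 = {0,1,…,M_S−1}, regarded as a subset of ℤ_M. Let S ~ P_S and let U be uniformly distributed on ℤ_M and independent of S. Define the encoder f*(s,u) = (s ⊖ u, u) ∈ ℤ_M × ℤ_M (⊖ is subtraction modulo M) and the shares (X,Y) = f*(S,U), and the decoder g*(x,y) = x ⊕ y if x ⊕ y ∈ 𝒮 and g*(x,y) = λ otherwise (⊕ is addition modulo M). Then g*(X,Y) = S almost surely (so H(S|X,Y) = 0), S is independent of X and S is independent of Y (so H(S|X) = H(S|Y) = H(S)), and I(X;Y) = log₂ M − H(S). Hence (f*, g*)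 realizes a (2,2)-threshold scheme with correlation level log₂ M − H(S) in the non-asymptotic sense, with |𝒳| = |𝒴| = |𝒰| = M and |𝒮| = M_S. -/
open Finset Filter Real
open scoped BigOperators

noncomputable section

theorem distOf_comp_inj {Ω α β : Type*} [Fintype Ω] (p : Ω → ℝ) (X : Ω → α) (φ : α → β)
    (hφ : Function.Injective φ) (a : α) :
    distOf p (fun ω => φ (X ω)) (φ a) = distOf p X a := by
  unfold distOf
  refine Finset.sum_congr ?_ fun _ _ => rfl
  ext ω
  simp [hφ.eq_iff]

theorem entRV_comp_inj {Ω α β : Type*} [Fintype Ω] [Fintype α] [Fintype β]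
    (p : Ω → ℝ) (X : Ω → α) (φ : α → β)
    (hφ : Function.Injective φ) :
    entRV p (fun ω => φ (X ω)) = entRV p X := by
  unfold entRV ent
  congr 1
  symm
  apply Fintype.sum_of_injective φ hφ
  · intro b hb
    have : distOf p (fun ω => φ (X ω)) b = 0 := by
      unfold distOf
      apply Finset.sum_eq_zero
      intro ω hω
      simp only [Finset.mem_filter_univ] at hω
      exact absurd ⟨X ω, hω⟩ hb
    rw [this, zero_mul]
  · intro a
    rw [distOf_comp_inj p X φ hφ]

theorem sum_distOf {Ω α : Type*} [Fintype Ω] [Fintype α] (p : Ω → ℝ) (X : Ω → α) :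
    ∑ a, distOf p X a = ∑ ω, p ω := by
  classical
  unfold distOf
  rw [← Finset.sum_fiberwise (s := Finset.univ) (g := X) (f := p)]

theorem sum_distOf_pair {Ω α β : Type*} [Fintype Ω] [Fintype α] (p : Ω → ℝ)
    (X : Ω → α) (Y : Ω → β) (b : β) :
    ∑ a, distOf p (fun ω => (X ω, Y ω)) (a, b) = distOf p Y b := by
  classical
  unfold distOf
  simp only [Finset.sum_filter]
  rw [Finset.sum_comm]
  refine Finset.sum_congr rfl fun ω _ => ?_
  by_cases h : Y ω = b <;> simp [h]

theorem entRV_indep {Ω α β : Type*} [Fintype Ω] [Fintype α] [Fintype β]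
    (p : Ω → ℝ) (hp : IsPMF p) (X : Ω → α) (Y : Ω → β) (h : IndepRV p X Y) :
    entRV p (fun ω => (X ω, Y ω)) = entRV p X + entRV p Y := by
  have h1 := (sum_distOf p X).trans hp.2
  have h2 := (sum_distOf p Y).trans hp.2
  unfold entRV ent
  rw [Fintype.sum_prod_type]
  have key : ∀ a b, distOf p (fun ω => (X ω, Y ω)) (a, b) *
      Real.logb 2 (distOf p (fun ω => (X ω, Y ω)) (a, b)) =
      (distOf p X a * Real.logb 2 (distOf p X a)) * distOf p Y b +
      distOf p X a * (distOf p Y b * Real.logb 2 (distOf p Y b)) := by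
    intro a b
    rw [h a b]
    by_cases ha : distOf p X a = 0
    · simp [ha]
    by_cases hb : distOf p Y b = 0
    · simp [hb]
    rw [Real.logb_mul ha hb]
    ring
  simp only [key, Finset.sum_add_distrib, ← Finset.mul_sum, ← Finset.sum_mul, h1, h2]
  ring

theorem entRV_unif {Ω : Type*} [Fintype Ω] (M : ℕ) [NeZero M] (p : Ω → ℝ)
    (U : Ω → ZMod M) (hU : ∀ u, distOf p U u = 1 / (M : ℝ)) :
    entRV p U = Real.logb 2 M := by
  have hM : (M : ℝ) ≠ 0 := Nat.cast_ne_zero.mpr (NeZero.ne M)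
  unfold entRV ent
  simp only [hU, Finset.sum_const, Finset.card_univ, ZMod.card, one_div, Real.logb_inv,
    nsmul_eq_mul]
  field_simp

open scoped Classical in
/-- the modular construction `f*(s,u) = (s ⊖ u, u)` on
`ℤ_M` with `𝒮 = {0,…,M_S−1}` (`M ≥ M_S ≥ 1`, `S ~ P_S` arbitrary, `U`
uniform on `ℤ_M` independent of `S`) together with the decoder
`g*(x,y) = x ⊕ y` (if `x ⊕ y ∈ 𝒮`, else `λ`) realizes a (2,2)-threshold
scheme with correlation level `log₂ M − H(S)` in the non-asymptotic sense:
`g*(X,Y) = S` a.s. (so `H(S|X,Y) = 0`), `S` is independent of each share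
(so `H(S|X) = H(S|Y) = H(S)`), `I(X;Y) = log₂ M − H(S)`, and
`|𝒳| = |𝒴| = |𝒰| = M`, `|𝒮| = M_S`. -/
theorem statement17 {Ω : Type} [Fintype Ω] (M MS : ℕ) [NeZero M]
    (hMS : 1 ≤ MS) (hM : MS ≤ M)
    (PS : Fin MS → ℝ) (hPS : IsPMF PS)
    (p : Ω → ℝ) (hp : IsPMF p)
    (S : Ω → Fin MS) (hS : ∀ s, distOf p S s = PS s)
    (U : Ω → ZMod M) (hU : ∀ u, distOf p U u = 1 / (M : ℝ))
    (hSU : IndepRV p S U)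
    (X : Ω → ZMod M) (hX : ∀ ω, X ω = ((S ω : ℕ) : ZMod M) - U ω)
    (Y : Ω → ZMod M) (hY : ∀ ω, Y ω = U ω)
    (g : ZMod M × ZMod M → Option (Fin MS))
    (hg : ∀ xy : ZMod M × ZMod M,
      g xy = if h : (xy.1 + xy.2).val < MS then some ⟨(xy.1 + xy.2).val, h⟩
             else none) :
    (∑ ω ∈ Finset.univ.filter (fun ω => g (X ω, Y ω) ≠ some (S ω)), p ω = 0) ∧
    condEnt p S (fun ω => (X ω, Y ω)) = 0 ∧
    IndepRV p S X ∧ IndepRV p S Y ∧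
    condEnt p S X = entRV p S ∧ condEnt p S Y = entRV p S ∧
    MI p X Y = Real.logb 2 M - entRV p S ∧
    Fintype.card (ZMod M) = M ∧ Fintype.card (Fin MS) = MS := by
  classical
  obtain rfl : Y = U := funext hY
  have hcast : Function.Injective (fun s : Fin MS => ((s : ℕ) : ZMod M)) := by
    intro a b hab
    have := congrArg ZMod.val hab
    simp only [ZMod.val_cast_of_lt (lt_of_lt_of_le a.2 hM),
      ZMod.val_cast_of_lt (lt_of_lt_of_le b.2 hM)] at this
    exact Fin.ext this
  have hXf : X = fun ω => ((S ω : ℕ) : ZMod M) - Y ω := funext hX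
  -- the injective maps
  have hi1 : Function.Injective (fun q : Fin MS × ZMod M => (((q.1 : ℕ) : ZMod M) - q.2, q.2)) := by
    rintro ⟨a, b⟩ ⟨c, d⟩ h
    simp only [Prod.mk.injEq] at h
    obtain ⟨h1, rfl⟩ := h
    have := hcast (sub_left_injective h1)
    simp [this]
  have hi2 : Function.Injective (fun q : Fin MS × ZMod M => (q.1, ((q.1 : ℕ) : ZMod M) - q.2)) := by
    rintro ⟨a, b⟩ ⟨c, d⟩ h
    simp only [Prod.mk.injEq] at h
    obtain ⟨rfl, h1⟩ := h
    have := sub_right_injective h1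
    simp [this]
  have hi3 : Function.Injective (fun q : Fin MS × ZMod M =>
      (q.1, (((q.1 : ℕ) : ZMod M) - q.2, q.2))) := by
    rintro ⟨a, b⟩ ⟨c, d⟩ h
    simp only [Prod.mk.injEq] at h
    simp [h.1, h.2.2]
  have e1 : entRV p (fun ω => (X ω, Y ω)) = entRV p (fun ω => (S ω, Y ω)) := by
    have h := entRV_comp_inj p (fun ω => (S ω, Y ω)) _ hi1
    simp only [hXf]
    exact h
  have e3 : entRV p (fun ω => (S ω, (X ω, Y ω))) = entRV p (fun ω => (S ω, Y ω)) := by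
    have h := entRV_comp_inj p (fun ω => (S ω, Y ω)) _ hi3
    simp only [hXf]
    exact h
  have hSX : ∀ s x, distOf p (fun ω => (S ω, X ω)) (s, x) = PS s * (1 / (M : ℝ)) := by
    intro s x
    have := distOf_comp_inj p (fun ω => (S ω, Y ω)) _ hi2 (s, ((s : ℕ) : ZMod M) - x)
    simp only [sub_sub_cancel] at this
    rw [hXf, this, hSU, hS, hU]
  have hXu : ∀ x, distOf p X x = 1 / (M : ℝ) := by
    intro x
    rw [← sum_distOf_pair p S X x]
    simp only [hSX, ← Finset.sum_mul, hPS.2, one_mul]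
  have hSXi : IndepRV p S X := by
    intro s x
    rw [hSX, hS, hXu]
  have eSY := entRV_indep p hp S Y hSU
  have eSX := entRV_indep p hp S X hSXi
  have eY := entRV_unif M p Y hU
  have eX := entRV_unif M p X hXu
  refine ⟨?_, ?_, hSXi, hSU, ?_, ?_, ?_, ZMod.card M, Fintype.card_fin MS⟩
  · apply Finset.sum_eq_zero
    intro ω hω
    have hv : (X ω + Y ω).val = (S ω : ℕ) := by
      rw [hX, sub_add_cancel, ZMod.val_cast_of_lt (lt_of_lt_of_le (S ω).2 hM)]
    have hgs : g (X ω, Y ω) = some (S ω) := by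
      rw [hg]
      have hlt : (X ω + Y ω).val < MS := hv ▸ (S ω).2
      rw [dif_pos hlt]
      exact congrArg some (Fin.ext hv)
    rw [Finset.mem_filter] at hω
    exact absurd hgs hω.2
  · unfold condEnt
    rw [e3, e1, sub_self]
  · unfold condEnt
    rw [eSX]; ring
  · unfold condEnt
    rw [eSY]; ring
  · unfold MI
    rw [e1, eSY, eX, eY]; ring
end
end
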